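/- arXiv:2502.14398 — 3 statements merged into one kernel-verified Lean document; each statement's English description precedes it below -/
import Mathlib

section
/- Let n be an even positive integer and k an integer, and let w_{n,k} ∈ Perm(ZMod n) be defined by w_{n,k}(i) = k - i. Set N_{n,k} = (n² - 2n)/4 if k - n/2 is odd, and N_{n,k} = (n² - 2n + 4)/4 if k - n/2 is even. If t_1, …, t_m are adjacent swaps such that t_m ∘ ⋯ ∘ t_1 ∘ w_{n,k} is the identity permutation, then m ≥ N_{n,k}. -/
/-!
Follow the tokens on the circle while the swaps are performed. For two tokens `i`, `j`, the parity
of the number of times they have been exchanged with each other is determined by whether their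
positions have changed order in `[0, n)`, together with the parities `b i`, `b j` of how often each
has crossed the edge between `n - 1` and `0`. A swap changes this parity for a single pair
(`step`), so the number of swaps is at least the number of unordered pairs with odd parity. Every
crossing of the edge involves two tokens, so `∑ i, b i = 0` in `ZMod 2` (`exists_bits`).

For the reflection `i ↦ k - i`, the pair `i ≠ j` has odd parity exactly when `i` and `j` receive
the same colour under `c i = [i ≤ k mod n] + b i` (`oddPairs_subLeft`). With `n = 2m` and colour
classes of sizes `m - s` and `m + s`, the number of monochromatic pairs is `m² - m + s²`, which
is at least `(n² - 2n)/4`. Moreover `m + s ≡ ∑ i, c i ≡ k + 1 (mod 2)`, so `s` is odd when `k - m`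
is even, which yields the additional swap in that case.
-/

/-- A permutation of `ZMod n` is an adjacent swap if it swaps two adjacent
points `i` and `i + 1` on the circle. -/
def IsAdjacentSwap {n : ℕ} (t : Equiv.Perm (ZMod n)) : Prop :=
  ∃ i : ZMod n, t = Equiv.swap i (i + 1)

/-- The ordered pairs of distinct tokens `i`, `j` whose cyclic exchange parity is odd: their order
(read off the representatives in `[0, n)`) has been reversed by `σ`, corrected by the parities
`b i`, `b j` of the number of times each token has passed between positions `n - 1` and `0`. -/
def oddPairs {n : ℕ} [NeZero n] (σ : Equiv.Perm (ZMod n)) (b : ZMod n → ZMod 2) :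
    Finset (ZMod n × ZMod n) :=
  {p | p.1 ≠ p.2 ∧ ((p.1.val < p.2.val ↔ (σ p.1).val < (σ p.2).val) ↔ b p.1 ≠ b p.2)}

lemma mem_oddPairs {n : ℕ} [NeZero n] (σ : Equiv.Perm (ZMod n)) (b : ZMod n → ZMod 2)
    (i j : ZMod n) : (i, j) ∈ oddPairs σ b ↔
      i ≠ j ∧ ((i.val < j.val ↔ (σ i).val < (σ j).val) ↔ b i ≠ b j) := by
  simp [oddPairs]

lemma val_add_one_cases {n : ℕ} [NeZero n] (h2 : 2 ≤ n) (q : ZMod n) :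
    (q.val + 1 < n ∧ (q + 1).val = q.val + 1) ∨ (q.val + 1 = n ∧ (q + 1).val = 0) := by
  have hq := ZMod.val_lt q
  have h1 : (1 : ZMod n).val = 1 := by
    have : Fact (1 < n) := ⟨h2⟩
    exact ZMod.val_one n
  rw [ZMod.val_add, h1]
  rcases Nat.lt_or_ge (q.val + 1) n with h | h
  · exact Or.inl ⟨h, Nat.mod_eq_of_lt h⟩
  · have : q.val + 1 = n := by omega
    exact Or.inr ⟨this, by rw [this, Nat.mod_self]⟩

lemma zmod_two_ne_add_one : ∀ x y : ZMod 2, (x + 1 ≠ y ↔ ¬ x ≠ y) ∧ (x ≠ y + 1 ↔ ¬ x ≠ y) := by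
  decide

lemma iff_flip {P Q R Q' R' : Prop} (hQ : Q' ↔ ¬ Q) (hR : R' ↔ ¬ R) :
    ((P ↔ Q') ↔ R') → ((P ↔ Q) ↔ R) := by
  tauto

/-- One adjacent swap changes the exchange parity of the two swapped tokens only; if the swap is
across the edge `{n - 1, 0}`, the two tokens also flip their bits, so that the bit sum is kept. The `2` accounts for both
orderings of the swapped pair. -/
lemma step {n : ℕ} [NeZero n] (h2 : 2 ≤ n) (σ : Equiv.Perm (ZMod n)) (b : ZMod n → ZMod 2)
    (q : ZMod n) : ∃ b' : ZMod n → ZMod 2, ∑ i, b' i = ∑ i, b i ∧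
      (oddPairs (Equiv.swap q (q + 1) * σ) b').card ≤ (oddPairs σ b).card + 2 := by
  suffices h : ∃ b' : ZMod n → ZMod 2, ∑ i, b' i = ∑ i, b i ∧
      oddPairs (Equiv.swap q (q + 1) * σ) b' ⊆
        insert (σ.symm q, σ.symm (q + 1)) (insert (σ.symm (q + 1), σ.symm q) (oddPairs σ b)) by
    obtain ⟨b', hs, hb⟩ := h
    refine ⟨b', hs, (Finset.card_le_card hb).trans ?_⟩
    have := Finset.card_insert_le (σ.symm q, σ.symm (q + 1))
      (insert (σ.symm (q + 1), σ.symm q) (oddPairs σ b))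
    have := Finset.card_insert_le (σ.symm (q + 1), σ.symm q) (oddPairs σ b)
    omega
  have hcases := val_add_one_cases h2 q
  have hne : q ≠ q + 1 := by
    intro h
    have := congrArg ZMod.val h
    omega
  have inj : ∀ x y : ZMod n, x ≠ y → x.val ≠ y.val := fun x y h h' => h (ZMod.val_injective n h')
  rcases hcases with ⟨hq, hq1⟩ | ⟨hq, hq1⟩
  · refine ⟨b, rfl, ?_⟩
    rintro ⟨i, j⟩ hij
    simp only [mem_oddPairs, Finset.mem_insert, Prod.mk.injEq, Equiv.Perm.mul_apply, Equiv.eq_symm_apply] at hij ⊢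
    obtain ⟨hne', hij⟩ := hij
    have hσ : σ i ≠ σ j := fun h => hne' (σ.injective h)
    by_cases e1 : σ i = q ∧ σ j = q + 1
    · exact Or.inl e1
    by_cases e2 : σ i = q + 1 ∧ σ j = q
    · exact Or.inr (Or.inl e2)
    refine Or.inr (Or.inr ⟨hne', ?_⟩)
    rw [← hij]
    have key : (σ i).val < (σ j).val ↔
        (Equiv.swap q (q + 1) (σ i)).val < (Equiv.swap q (q + 1) (σ j)).val := by
      clear hij
      generalize σ i = x at *
      generalize σ j = y at *
      have a1 := inj x y hσ
      have a2 := inj x q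
      have a3 := inj x (q + 1)
      have a4 := inj y q
      have a5 := inj y (q + 1)
      simp only [Equiv.swap_apply_def]
      by_cases c1 : x = q <;> by_cases c2 : x = q + 1 <;> by_cases c3 : y = q <;>
        by_cases c4 : y = q + 1 <;> grind
    rw [key]
  · refine ⟨fun i => b i + ((if i = σ.symm q then 1 else 0) +
      (if i = σ.symm (q + 1) then 1 else 0)), ?_, ?_⟩
    · simp only [Finset.sum_add_distrib, Finset.sum_ite_eq', Finset.mem_univ, if_true]
      rw [show (1 : ZMod 2) + 1 = 0 from by decide, add_zero]
    rintro ⟨i, j⟩ hij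
    simp only [mem_oddPairs, Finset.mem_insert, Prod.mk.injEq, Equiv.Perm.mul_apply, Equiv.eq_symm_apply] at hij ⊢
    obtain ⟨hne', hij⟩ := hij
    have hσ : σ i ≠ σ j := fun h => hne' (σ.injective h)
    by_cases e1 : σ i = q ∧ σ j = q + 1
    · exact Or.inl e1
    by_cases e2 : σ i = q + 1 ∧ σ j = q
    · exact Or.inr (Or.inl e2)
    refine Or.inr (Or.inr ⟨hne', ?_⟩)
    have z := zmod_two_ne_add_one (b i) (b j)
    revert hij
    generalize σ i = x at *
    generalize σ j = y at *
    have lx := ZMod.val_lt x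
    have ly := ZMod.val_lt y
    have a2 := inj x q
    have a3 := inj x (q + 1)
    have a4 := inj y q
    have a5 := inj y (q + 1)
    have hne2 := hne.symm
    have a1 := inj x y hσ
    -- A token leaving position `n - 1` for `0` (or conversely) flips both its bit and its order
    -- relative to every token outside the swap.
    by_cases x1 : x = q
    · have y1 : y ≠ q := fun h => hσ (x1.trans h.symm)
      have y2 : y ≠ q + 1 := fun h => e1 ⟨x1, h⟩
      subst x1
      have := a5 y2
      apply iff_flip
      · rw [Equiv.swap_apply_left, Equiv.swap_apply_of_ne_of_ne y1 y2]
        omega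
      · simpa only [if_true, if_neg hne, if_neg y1, if_neg y2, add_zero] using z.1
    by_cases x2 : x = q + 1
    · have y1 : y ≠ q := fun h => e2 ⟨x2, h⟩
      have y2 : y ≠ q + 1 := fun h => hσ (x2.trans h.symm)
      have := a5 y2
      apply iff_flip
      · rw [x2, Equiv.swap_apply_right, Equiv.swap_apply_of_ne_of_ne y1 y2]
        omega
      · simpa only [x2, if_true, if_neg hne2, if_neg y1, if_neg y2, add_zero, zero_add] using z.1
    by_cases y1 : y = q
    · subst y1
      have := a2 x1
      apply iff_flip
      · rw [Equiv.swap_apply_left, Equiv.swap_apply_of_ne_of_ne x1 x2]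
        omega
      · simpa only [if_true, if_neg hne, if_neg x1, if_neg x2, add_zero] using z.2
    by_cases y2 : y = q + 1
    · have := a2 x1
      apply iff_flip
      · rw [y2, Equiv.swap_apply_right, Equiv.swap_apply_of_ne_of_ne x1 x2]
        omega
      · simpa only [y2, if_true, if_neg hne2, if_neg x1, if_neg x2, add_zero, zero_add] using z.2
    simp only [Equiv.swap_apply_of_ne_of_ne x1 x2, Equiv.swap_apply_of_ne_of_ne y1 y2,
      if_neg x1, if_neg x2, if_neg y1, if_neg y2, add_zero]
    exact id

/-- The product of a list of adjacent swaps has, for suitable crossing bits of even total, at most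
`l.length` unordered pairs of odd exchange parity; `oddPairs` counts each of them twice. -/
lemma exists_bits {n : ℕ} [NeZero n] (h2 : 2 ≤ n) (l : List (Equiv.Perm (ZMod n)))
    (hl : ∀ t ∈ l, IsAdjacentSwap t) :
    ∃ b : ZMod n → ZMod 2, ∑ i, b i = 0 ∧ (oddPairs l.prod b).card ≤ 2 * l.length := by
  induction l with
  | nil => exact ⟨fun _ => 0, by simp, by simp [oddPairs]⟩
  | cons t l ih =>
    obtain ⟨b, hb, hc⟩ := ih fun s hs => hl s (List.mem_cons_of_mem _ hs)
    obtain ⟨q, rfl⟩ := hl t List.mem_cons_self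
    obtain ⟨b', hb', hc'⟩ := step h2 l.prod b q
    refine ⟨b', hb'.trans hb, ?_⟩
    rw [List.prod_cons, List.length_cons]
    omega

lemma val_sub_cases {n : ℕ} [NeZero n] (a i : ZMod n) :
    (i.val ≤ a.val ∧ (a - i).val = a.val - i.val) ∨
      (a.val < i.val ∧ (a - i).val + i.val = a.val + n) := by
  rcases Nat.lt_or_ge a.val i.val with h | h
  · refine Or.inr ⟨h, ?_⟩
    have h1 : (a - i + i).val = a.val := by rw [sub_add_cancel]
    rw [ZMod.val_add] at h1
    have := ZMod.val_lt (a - i)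
    have := ZMod.val_lt i
    rcases Nat.lt_or_ge ((a - i).val + i.val) n with h3 | h3
    · rw [Nat.mod_eq_of_lt h3] at h1; omega
    · rw [Nat.mod_eq_sub_mod h3, Nat.mod_eq_of_lt (by omega)] at h1; omega
  · exact Or.inl ⟨h, ZMod.val_sub h⟩

lemma sum_indicator_val_le {n : ℕ} [NeZero n] (a : ZMod n) :
    ∑ i : ZMod n, (if i.val ≤ a.val then (1 : ZMod 2) else 0) = (a.val + 1 : ℕ) := by
  rw [Finset.sum_boole]
  congr 1
  rw [← Finset.card_range (a.val + 1)]
  have ha := ZMod.val_lt a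
  refine Finset.card_bij (fun i _ => i.val) ?_ ?_ ?_
  · intro i hi
    simp only [Finset.mem_filter, Finset.mem_univ, true_and] at hi
    exact Finset.mem_range.2 (by omega)
  · intro i _ j _ h
    exact ZMod.val_injective n h
  · intro m hm
    rw [Finset.mem_range] at hm
    have hv : (m : ZMod n).val = m := ZMod.val_cast_of_lt (by omega)
    exact ⟨m, by simp only [Finset.mem_filter, Finset.mem_univ, true_and, hv]; omega, hv⟩

lemma zmod_two_aux : ∀ x y x' y' : ZMod 2, ((x ≠ y ↔ x' ≠ y') ↔ x + x' = y + y') := by decide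

lemma zmod_two_ne_zero_iff : ∀ x : ZMod 2, x ≠ 0 ↔ x = 1 := by decide

/-- For the reflection `i ↦ a - i` the relation "odd exchange parity" is "same colour" for a
two-colouring of the tokens. -/
lemma oddPairs_subLeft {n : ℕ} [NeZero n] (a : ZMod n) (b : ZMod n → ZMod 2) :
    oddPairs (Equiv.subLeft a) b =
      ({p | p.1 ≠ p.2 ∧ (if p.1.val ≤ a.val then (1 : ZMod 2) else 0) + b p.1 =
        (if p.2.val ≤ a.val then (1 : ZMod 2) else 0) + b p.2} : Finset (ZMod n × ZMod n)) := by
  ext ⟨i, j⟩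
  simp only [mem_oddPairs, Finset.mem_filter, Finset.mem_univ, true_and, Equiv.subLeft_apply]
  refine and_congr_right fun hij => ?_
  rw [← zmod_two_aux]
  have h0 : i.val ≠ j.val := fun h => hij (ZMod.val_injective n h)
  have hi := val_sub_cases a i
  have hj := val_sub_cases a j
  have li := ZMod.val_lt i
  have lj := ZMod.val_lt j
  have key : (i.val < j.val ↔ (a - i).val < (a - j).val) ↔
      (if i.val ≤ a.val then (1 : ZMod 2) else 0) ≠ (if j.val ≤ a.val then (1 : ZMod 2) else 0) := by
    split_ifs <;> simp <;> omega
  rw [key]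

/-- `A` and `B` are the sizes of the colour classes of `0` and `1`. -/
lemma card_same_color {α : Type*} [Fintype α] [DecidableEq α] (c : α → ZMod 2) :
    ∃ A B : ℕ, A + B = Fintype.card α ∧ ((B : ℕ) : ZMod 2) = ∑ i, c i ∧
      ({p : α × α | p.1 ≠ p.2 ∧ c p.1 = c p.2} : Finset (α × α)).card + Fintype.card α =
        A * A + B * B := by
  classical
  let S : ZMod 2 → Finset α := fun x => {i | c i = x}
  refine ⟨(S 0).card, (S 1).card, ?_, ?_, ?_⟩
  · have := Finset.card_filter_add_card_filter_not (s := (Finset.univ : Finset α)) (fun i => c i = 0)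
    simp only [← ne_eq, zmod_two_ne_zero_iff] at this
    simpa [S] using this
  · rw [← Finset.sum_boole]
    refine Finset.sum_congr rfl fun i _ => ?_
    generalize c i = x
    revert x
    decide
  · have hd : Fintype.card α = (Finset.univ : Finset α).diag.card := by simp
    rw [hd, ← Finset.card_union_of_disjoint, ← Finset.card_product, ← Finset.card_product,
      ← Finset.card_union_of_disjoint]
    · congr 1
      ext ⟨i, j⟩
      simp only [S, Finset.mem_union, Finset.mem_filter, Finset.mem_univ, true_and,
        Finset.mem_diag, Finset.mem_product]
      have h : ∀ x y : ZMod 2, x = y ↔ (x = 0 ∧ y = 0) ∨ (x = 1 ∧ y = 1) := by decide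
      rw [← h]
      by_cases hij : i = j <;> simp [hij]
    · rw [Finset.disjoint_left]
      rintro ⟨i, j⟩ h1 h2
      simp only [S, Finset.mem_product, Finset.mem_filter, Finset.mem_univ, true_and] at h1 h2
      exact absurd (h1.1.symm.trans h2.1) (by decide)
    · rw [Finset.disjoint_left]
      rintro ⟨i, j⟩ h1 h2
      simp only [Finset.mem_filter, Finset.mem_univ, true_and, Finset.mem_diag] at h1 h2
      exact h1.1 h2

/-- Sorting `w_{n,k} : i ↦ k - i` (for even `n`) by adjacent swaps requires at
least `N_{n,k}` swaps, where `N_{n,k} = (n² - 2n)/4` if `k - n/2` is odd and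
`N_{n,k} = (n² - 2n + 4)/4` if `k - n/2` is even. -/
theorem lower_bound_even (n : ℕ) (hn : 0 < n) (heven : Even n) (k : ℤ)
    (l : List (Equiv.Perm (ZMod n)))
    (hl : ∀ t ∈ l, IsAdjacentSwap t)
    (hsort : l.prod * Equiv.subLeft (k : ZMod n) = 1) :
    (if Odd (k - (n : ℤ) / 2) then ((n : ℤ) ^ 2 - 2 * n) / 4
      else ((n : ℤ) ^ 2 - 2 * n + 4) / 4) ≤ (l.length : ℤ) := by
  have : NeZero n := ⟨hn.ne'⟩
  obtain ⟨m, hm⟩ := heven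
  have hprod : l.prod = Equiv.subLeft (k : ZMod n) := by
    rw [eq_inv_of_mul_eq_one_left hsort]
    ext i
    simp [Equiv.Perm.inv_def, neg_add_eq_sub]
  obtain ⟨b, hb, hcard⟩ := exists_bits (by omega) l hl
  rw [hprod, oddPairs_subLeft] at hcard
  obtain ⟨A, B, hAB, hB, hS⟩ := card_same_color fun i : ZMod n =>
    (if i.val ≤ (k : ZMod n).val then (1 : ZMod 2) else 0) + b i
  rw [Finset.sum_add_distrib, hb, add_zero, sum_indicator_val_le] at hB
  rw [ZMod.card] at hAB hS
  have hBk : (B : ℤ) % 2 = (k + 1) % 2 := by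
    have h1 := (ZMod.natCast_eq_natCast_iff' _ _ _).1 hB
    have h2 : (((k : ZMod n).val : ℕ) : ℤ) = k % n := ZMod.val_intCast k
    have h3 : (k % (n : ℤ)) % 2 = k % 2 := Int.emod_emod_of_dvd k ⟨m, by omega⟩
    omega
  -- The parity of `s` is that of `k + 1 - m`.
  obtain ⟨s, hs⟩ : ∃ s : ℤ, (B : ℤ) = m + s := ⟨B - m, by ring⟩
  have hA : (A : ℤ) = m - s := by omega
  have hnm : (n : ℤ) = 2 * m := by omega
  have hlen : (m : ℤ) ^ 2 - m + s ^ 2 ≤ l.length := by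
    have h1 : (A : ℤ) * A + B * B ≤ 2 * l.length + n := by
      have := hS ▸ Nat.add_le_add_right hcard n
      exact_mod_cast this
    rw [hA, hs, hnm] at h1
    nlinarith
  have e1 : ((n : ℤ) ^ 2 - 2 * n) / 4 = m ^ 2 - m := by
    rw [hnm, show (2 * (m : ℤ)) ^ 2 - 2 * (2 * m) = 4 * (m ^ 2 - m) by ring]
    exact Int.mul_ediv_cancel_left _ (by norm_num)
  have e2 : ((n : ℤ) ^ 2 - 2 * n + 4) / 4 = m ^ 2 - m + 1 := by
    rw [hnm, show (2 * (m : ℤ)) ^ 2 - 2 * (2 * m) + 4 = 4 * (m ^ 2 - m + 1) by ring]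
    exact Int.mul_ediv_cancel_left _ (by norm_num)
  rw [e1, e2]
  split_ifs with h
  · nlinarith [sq_nonneg s]
  · have hs0 : s ≠ 0 := by
      rintro rfl
      rw [Int.odd_iff] at h
      omega
    have : 0 < s ^ 2 := by positivity
    omega
end

section
/- For every integer n > 1, t(n) ≥ n - ⌈e·(ln n + 1)⌉, where e is Euler's number and ln the natural logarithm. -/
/-!
The proof is the first-moment method. For a uniformly random permutation `σ` of an `n`-element
set, `∑ σ, x ^ cyc σ = x (x + 1) ⋯ (x + n - 1)`; only `≤` is needed, for `x ≥ 1`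
(`sum_pow_cyc_le`). It follows by induction on `n`: inserting a new point into `τ` either
creates a fixed point (`cyc_optionCongr_le`) or enlarges an existing cycle in one of `n` ways
(`cyc_swap_optionCongr_le`).

With `x = e`, the bounds `1 + u ≤ exp u` and `H_n ≤ 1 + log n` give
`e (e + 1) ⋯ (e + n - 1) ≤ n! exp ((e - 1) (1 + log n))` (`prod_exp_add_le`). As `π ↦ π * c ^ j`
permutes the symmetric group, the sum of `exp (cyc (π * c ^ j))` over all `π` and all `j < n` is
at most `n · n! · exp ((e - 1) (1 + log n))`. If every `π` had some `j` with
`cyc (π * c ^ j) ≥ e (log n + 1) + 1`, this sum would be at least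
`n! exp (e (log n + 1) + 1)`, which is larger by a factor `e ^ 2`. So some `π` has
`cyc (π * c ^ j) ≤ ⌈e (log n + 1)⌉` for all `j` (`exists_perm_cyc_le`).
-/

/-- The number of cycles of a permutation `σ` (counting fixed points):
the number of orbits of the subgroup generated by `σ`. -/
noncomputable def cyc {α : Type*} (σ : Equiv.Perm α) : ℕ :=
  Nat.card (MulAction.orbitRel.Quotient (Subgroup.zpowers σ) α)

/-- The trivial cyclic shift `i ↦ i + 1` on `ZMod n`. -/
def c (n : ℕ) : Equiv.Perm (ZMod n) := Equiv.addRight 1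

/-- `t n = max_{π} min_{0 ≤ j < n} (n - cyc (π ∘ c^j))`. -/
noncomputable def t (n : ℕ) : ℕ :=
  sSup {m | ∃ π : Equiv.Perm (ZMod n),
    m = sInf {r | ∃ j < n, r = n - cyc (π * c n ^ j)}}

/-- The set of cycles of `σ`, whose cardinality is `cyc σ`. -/
abbrev Cycles {α : Type*} (σ : Equiv.Perm α) : Type _ :=
  MulAction.orbitRel.Quotient (Subgroup.zpowers σ) α

/-- The cycle of `σ` through `a`. -/
def toCycle {α : Type*} (σ : Equiv.Perm α) (a : α) : Cycles σ :=
  Quotient.mk (MulAction.orbitRel (Subgroup.zpowers σ) α) a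

lemma toCycle_apply {α : Type*} (σ : Equiv.Perm α) (a : α) :
    toCycle σ (σ a) = toCycle σ a :=
  Quotient.sound ⟨⟨σ, Subgroup.mem_zpowers σ⟩, rfl⟩

lemma toCycle_surjective {α : Type*} (σ : Equiv.Perm α) :
    Function.Surjective (toCycle σ) :=
  Quotient.mk_surjective

lemma invariant_zpow {α β : Type*} (σ : Equiv.Perm α) (f : α → β)
    (hf : ∀ a, f (σ a) = f a) (k : ℤ) : ∀ a, f ((σ ^ k) a) = f a := by
  induction k with
  | zero => simp
  | succ k ih => intro a; rw [zpow_add_one, Equiv.Perm.mul_apply, ih, hf]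
  | pred k ih =>
    intro a
    rw [zpow_sub_one, Equiv.Perm.mul_apply, ih, ← hf]
    simp

/-- A `σ`-invariant function on `α` descends to the cycles of `σ`. -/
def liftCycles {α β : Type*} (σ : Equiv.Perm α) (f : α → β)
    (hf : ∀ a, f (σ a) = f a) : Cycles σ → β :=
  Quotient.lift f (by
    rintro a b ⟨⟨_, k, rfl⟩, rfl⟩
    exact invariant_zpow σ f hf k b)

lemma liftCycles_toCycle {α β : Type*} (σ : Equiv.Perm α) (f : α → β)
    (hf : ∀ a, f (σ a) = f a) (a : α) : liftCycles σ f hf (toCycle σ a) = f a :=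
  rfl

lemma cyc_permCongr_le {α β : Type*} [Finite α] (e : α ≃ β) (τ : Equiv.Perm α) :
    cyc (e.permCongr τ) ≤ cyc τ := by
  refine Nat.card_le_card_of_surjective
    (liftCycles τ (fun a => toCycle (e.permCongr τ) (e a)) fun a => ?_) fun q => ?_
  · rw [← toCycle_apply _ (e a)]
    simp [Equiv.permCongr_apply]
  · obtain ⟨b, rfl⟩ := toCycle_surjective _ q
    exact ⟨toCycle τ (e.symm b), by simp [liftCycles_toCycle]⟩

lemma cyc_optionCongr_le {α : Type*} [Finite α] (τ : Equiv.Perm α) :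
    cyc (Equiv.optionCongr τ) ≤ cyc τ + 1 := by
  rw [cyc, cyc, ← Finite.card_option]
  refine Nat.card_le_card_of_surjective
    (fun o : Option (Cycles τ) => o.elim (toCycle (Equiv.optionCongr τ) none)
      (liftCycles τ (fun a => toCycle (Equiv.optionCongr τ) (some a)) fun a => ?_))
    fun q => ?_
  · rw [← toCycle_apply _ (some a)]
    rfl
  · obtain ⟨_ | a, rfl⟩ := toCycle_surjective _ q
    · exact ⟨none, rfl⟩
    · exact ⟨some (toCycle τ a), rfl⟩

lemma cyc_swap_optionCongr_le {α : Type*} [Finite α] [DecidableEq α] (i : α)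
    (τ : Equiv.Perm α) :
    cyc (Equiv.swap none (some i) * Equiv.optionCongr τ) ≤ cyc τ := by
  set σ := Equiv.swap none (some i) * Equiv.optionCongr τ with hσ
  have hnone : toCycle σ (some i) = toCycle σ none := by
    rw [← toCycle_apply σ none]
    simp [hσ]
  refine Nat.card_le_card_of_surjective
    (liftCycles τ (fun a => toCycle σ (some a)) fun a => ?_) fun q => ?_
  · rw [← toCycle_apply σ (some a)]
    by_cases h : τ a = i
    · have : σ (some a) = none := by simp [hσ, h]
      rw [this, h, hnone]
    · have : σ (some a) = some (τ a) := by
        simp [hσ, Equiv.swap_apply_of_ne_of_ne, h]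
      rw [this]
  · obtain ⟨_ | a, rfl⟩ := toCycle_surjective _ q
    · exact ⟨toCycle τ i, hnone⟩
    · exact ⟨toCycle τ a, rfl⟩

/-- The cycle generating function of the symmetric group is bounded by the rising factorial
(in fact equal to it, but the upper bound suffices). -/
lemma sum_pow_cyc_le (x : ℝ) (hx : 1 ≤ x) (α : Type*) [Fintype α] :
    ∀ [DecidableEq α], ∑ σ : Equiv.Perm α, x ^ cyc σ ≤
      ∏ k ∈ Finset.range (Fintype.card α), (x + k) := by
  refine Fintype.induction_empty_option
    (P := fun α _ => ∀ [DecidableEq α], ∑ σ : Equiv.Perm α, x ^ cyc σ ≤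
      ∏ k ∈ Finset.range (Fintype.card α), (x + k)) ?_ ?_ ?_ α
  · intro α β _ e ih _
    classical
    let := Fintype.ofEquiv β e.symm
    rw [← Fintype.card_congr e, ← Equiv.sum_comp e.permCongr]
    refine (Finset.sum_le_sum fun τ _ => ?_).trans ih
    exact pow_le_pow_right₀ hx (cyc_permCongr_le e τ)
  · intro _
    simp [cyc]
  · intro α _ ih _
    classical
    rw [Fintype.card_option, Finset.prod_range_succ,
      ← Equiv.sum_comp Equiv.Perm.decomposeOption.symm, Fintype.sum_prod_type,
      Fintype.sum_option]
    have h0 : ∑ τ : Equiv.Perm α, x ^ cyc (Equiv.Perm.decomposeOption.symm (none, τ)) ≤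
        x * ∑ τ : Equiv.Perm α, x ^ cyc τ := by
      rw [Finset.mul_sum]
      refine Finset.sum_le_sum fun τ _ => ?_
      rw [← pow_succ']
      refine pow_le_pow_right₀ hx ?_
      convert cyc_optionCongr_le τ using 2
      ext1 o
      simp
    have h1 : ∑ i : α, ∑ τ : Equiv.Perm α,
        x ^ cyc (Equiv.Perm.decomposeOption.symm (some i, τ)) ≤
        Fintype.card α * ∑ τ : Equiv.Perm α, x ^ cyc τ := by
      rw [← nsmul_eq_mul, ← Finset.card_univ]
      refine Finset.sum_le_card_nsmul _ _ _ fun i _ => Finset.sum_le_sum fun τ _ => ?_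
      refine pow_le_pow_right₀ hx ?_
      convert cyc_swap_optionCongr_le i τ using 2
      simp
    calc _ ≤ (∑ τ : Equiv.Perm α, x ^ cyc τ) * (x + Fintype.card α) := by linarith
      _ ≤ _ := mul_le_mul_of_nonneg_right ih (by positivity)

lemma prod_exp_add_le (n : ℕ) :
    ∏ k ∈ Finset.range n, (Real.exp 1 + k) ≤
      n.factorial * Real.exp ((Real.exp 1 - 1) * (1 + Real.log n)) := by
  have he : (0 : ℝ) ≤ Real.exp 1 - 1 := by linarith [Real.add_one_le_exp (1 : ℝ)]
  have hprod : ∏ k ∈ Finset.range n, (Real.exp 1 + k) ≤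
      n.factorial * Real.exp ((Real.exp 1 - 1) * harmonic n) := by
    induction n with
    | zero => simp
    | succ n ih =>
      have hstep : Real.exp 1 + n ≤
          (n + 1) * Real.exp ((Real.exp 1 - 1) * ((n : ℝ) + 1)⁻¹) := by
        have h := Real.add_one_le_exp ((Real.exp 1 - 1) * ((n : ℝ) + 1)⁻¹)
        calc Real.exp 1 + n = (n + 1) * ((Real.exp 1 - 1) * ((n : ℝ) + 1)⁻¹ + 1) := by
              field_simp; ring
          _ ≤ _ := by gcongr
      rw [Finset.prod_range_succ]
      refine (mul_le_mul ih hstep (by positivity) (by positivity)).trans_eq ?_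
      rw [harmonic_succ, Nat.factorial_succ]
      push_cast
      rw [mul_add, Real.exp_add]
      ring
  refine hprod.trans ?_
  gcongr
  exact harmonic_le_one_add_log n

lemma exists_perm_cyc_le (n : ℕ) (hn : 1 < n) :
    ∃ π : Equiv.Perm (ZMod n), ∀ j < n,
      (cyc (π * c n ^ j) : ℤ) ≤ ⌈Real.exp 1 * (Real.log n + 1)⌉ := by
  have : NeZero n := ⟨by omega⟩
  by_contra! hcon
  set E := Real.exp 1 with hE
  have hE1 : 1 ≤ E := by linarith [Real.add_one_le_exp (1 : ℝ)]
  have hn0 : (0 : ℝ) < n := by positivity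
  have hlower : (n.factorial : ℝ) * Real.exp (E * (Real.log n + 1) + 1) ≤
      ∑ π : Equiv.Perm (ZMod n), ∑ j ∈ Finset.range n, E ^ cyc (π * c n ^ j) := by
    have hcard : (Finset.univ : Finset (Equiv.Perm (ZMod n))).card = n.factorial := by
      rw [Finset.card_univ, Fintype.card_perm, ZMod.card]
    rw [← nsmul_eq_mul, ← hcard]
    refine Finset.card_nsmul_le_sum _ _ _ fun π _ => ?_
    obtain ⟨j, hj, hlt⟩ := hcon π
    have hreal : E * (Real.log n + 1) + 1 ≤ (cyc (π * c n ^ j) : ℝ) := by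
      have h1 : ((⌈E * (Real.log n + 1)⌉ : ℤ) : ℝ) + 1 ≤ (cyc (π * c n ^ j) : ℝ) := by
        exact_mod_cast hlt
      linarith [Int.le_ceil (E * (Real.log n + 1))]
    calc Real.exp (E * (Real.log n + 1) + 1) ≤ Real.exp (cyc (π * c n ^ j)) :=
          Real.exp_le_exp.mpr hreal
      _ = E ^ cyc (π * c n ^ j) := by rw [hE, ← Real.exp_nat_mul, mul_one]
      _ ≤ _ := Finset.single_le_sum (f := fun j => E ^ cyc (π * c n ^ j))
          (fun j _ => by positivity) (Finset.mem_range.mpr hj)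
  have hupper : ∑ π : Equiv.Perm (ZMod n), ∑ j ∈ Finset.range n, E ^ cyc (π * c n ^ j) ≤
      n * (n.factorial * Real.exp ((E - 1) * (1 + Real.log n))) := by
    rw [Finset.sum_comm]
    have hterm : ∀ j ∈ Finset.range n,
        ∑ π : Equiv.Perm (ZMod n), E ^ cyc (π * c n ^ j) ≤
          n.factorial * Real.exp ((E - 1) * (1 + Real.log n)) := by
      intro j _
      refine (Equiv.sum_comp (Equiv.mulRight (c n ^ j)) (fun σ => E ^ cyc σ)).trans_le ?_
      have h := sum_pow_cyc_le E hE1 (ZMod n)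
      rw [ZMod.card] at h
      exact h.trans (prod_exp_add_le n)
    simpa using Finset.sum_le_card_nsmul _ _ _ hterm
  have hexp : n * (n.factorial * Real.exp ((E - 1) * (1 + Real.log n))) =
      n.factorial * Real.exp (E * (Real.log n + 1) - 1) := by
    have : E * (Real.log n + 1) - 1 = Real.log n + (E - 1) * (1 + Real.log n) := by ring
    rw [this, Real.exp_add, Real.exp_log hn0]
    ring
  have hfac : (0 : ℝ) < n.factorial := by positivity
  have hle := (hlower.trans hupper).trans_eq hexp
  have := Real.exp_le_exp.mp (le_of_mul_le_mul_left hle hfac)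
  linarith

theorem t_general_lower_bound (n : ℕ) (hn : 1 < n) :
    (n : ℤ) - ⌈Real.exp 1 * (Real.log n + 1)⌉ ≤ (t n : ℤ) := by
  obtain ⟨π, hπ⟩ := exists_perm_cyc_le n hn
  have hne : ∀ π : Equiv.Perm (ZMod n),
      {r | ∃ j < n, r = n - cyc (π * c n ^ j)}.Nonempty :=
    fun π => ⟨_, 0, by omega, rfl⟩
  have hle : sInf {r | ∃ j < n, r = n - cyc (π * c n ^ j)} ≤ t n := by
    refine le_csSup ⟨n, ?_⟩ ⟨π, rfl⟩
    rintro m ⟨π', rfl⟩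
    obtain ⟨j, _, h⟩ := Nat.sInf_mem (hne π')
    omega
  obtain ⟨j, hj, h⟩ := Nat.sInf_mem (hne π)
  have := hπ j hj
  omega
end

section
/- For every integer k ≥ 3, the permutation of ZMod 2^k given by multiplication by 3 has exactly 2k - 1 cycles (counting fixed points). -/
lemma three_pow_two_pow (m : ℕ) :
    ∃ u : ℤ, (3 : ℤ) ^ (2 ^ (m + 1)) = 1 + 2 ^ (m + 3) * (2 * u + 1) := by
  induction m with
  | zero => exact ⟨0, by norm_num⟩
  | succ m ih =>
    obtain ⟨u, hu⟩ := ih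
    refine ⟨u + 2 ^ (m + 1) * (2 * u + 1) ^ 2, ?_⟩
    rw [pow_succ 2 (m + 1), pow_mul, hu]
    ring

/-- The lifting step: an error of exactly `2 ^ (m + 3)` is removed by multiplying the power of `3`
by `3 ^ (2 ^ (m + 1))`. -/
lemma exists_three_pow_of_mod_eight (m : ℕ) (a : ℤ) (ha : a % 8 = 1 ∨ a % 8 = 3) :
    ∃ i : ℕ, (2 : ℤ) ^ (m + 3) ∣ a - 3 ^ i := by
  induction m with
  | zero =>
    rcases ha with h | h
    · exact ⟨0, by norm_num; omega⟩
    · exact ⟨1, by norm_num; omega⟩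
  | succ m ih =>
    obtain ⟨i, t, ht⟩ := ih
    rcases Int.even_or_odd' t with ⟨c, hc | hc⟩
    · exact ⟨i, c, by rw [ht, hc]; ring⟩
    · obtain ⟨u, hu⟩ := three_pow_two_pow m
      obtain ⟨d, hd⟩ : Odd ((3 : ℤ) ^ i) := Odd.pow (by decide)
      refine ⟨i + 2 ^ (m + 1), c - u - d * (2 * u + 1), ?_⟩
      have h1 : a = 3 ^ i + 2 ^ (m + 3) * (2 * c + 1) := by rw [← hc]; linarith
      rw [pow_add, hu, h1, hd]
      ring

lemma exists_three_pow (k : ℕ) (a : ℤ) (ha : Odd a) :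
    ∃ i : ℕ, (2 : ℤ) ^ k ∣ a - 3 ^ i ∨ (2 : ℤ) ^ k ∣ a + 3 ^ i := by
  have hdvd : (2 : ℤ) ^ k ∣ 2 ^ (k + 3) := pow_dvd_pow 2 (by omega)
  have h : (a % 8 = 1 ∨ a % 8 = 3) ∨ ((-a) % 8 = 1 ∨ (-a) % 8 = 3) := by
    obtain ⟨c, hc⟩ := ha
    omega
  rcases h with h | h
  · obtain ⟨i, hi⟩ := exists_three_pow_of_mod_eight k a h
    exact ⟨i, Or.inl (hdvd.trans hi)⟩
  · obtain ⟨i, hi⟩ := exists_three_pow_of_mod_eight k (-a) h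
    exact ⟨i, Or.inr ((dvd_neg.2 (hdvd.trans hi)).trans (dvd_of_eq (by ring)))⟩

lemma not_eight_dvd_three_pow_add_one (i : ℕ) : ¬ (8 : ℤ) ∣ 3 ^ i + 1 := by
  have h : (3 : ℤ) ^ i % 8 = 1 ∨ (3 : ℤ) ^ i % 8 = 3 := by
    induction i with
    | zero => simp
    | succ i ih => rw [pow_succ]; omega
  omega

lemma not_two_pow_dvd {k j : ℕ} (hj : j < k) {u : ℤ} (hu : Odd u) :
    ¬ (2 : ℤ) ^ k ∣ 2 ^ j * u := by
  intro h
  have h2 : (2 : ℤ) ^ j * 2 ∣ 2 ^ j * u := by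
    rw [← pow_succ]
    exact (pow_dvd_pow 2 hj).trans h
  have h3 := (mul_dvd_mul_iff_left (by positivity)).1 h2
  obtain ⟨c, hc⟩ := hu
  omega

/-- Modulo `2 ^ k`, the `2`-adic valuation is well defined as long as it is less than `k`. -/
lemma le_of_two_pow_dvd_sub {k j l : ℕ} (hj : j < k) {u v : ℤ} (hu : Odd u)
    (h : (2 : ℤ) ^ k ∣ 2 ^ j * u - 2 ^ l * v) : l ≤ j := by
  by_contra! hl
  refine not_two_pow_dvd (Nat.lt_succ_self j) hu ?_
  have h1 := (pow_dvd_pow (2 : ℤ) hj).trans h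
  have h2 : (2 : ℤ) ^ (j + 1) ∣ 2 ^ l * v := (pow_dvd_pow 2 hl).mul_right v
  exact (dvd_sub_left h2).1 h1

lemma orbit_mk_eq_iff {k : ℕ} (g : (ZMod (2 ^ k))ˣ) (hg : (g : ZMod (2 ^ k)) = 3)
    (x y : ZMod (2 ^ k)) :
    (Quotient.mk'' x : MulAction.orbitRel.Quotient (Subgroup.zpowers (Units.mulLeft g))
      (ZMod (2 ^ k))) = Quotient.mk'' y ↔ ∃ i : ℕ, x = 3 ^ i * y := by
  have hpow (i : ℕ) : (Units.mulLeft g ^ i) y = 3 ^ i * y := by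
    induction i with
    | zero => simp
    | succ i ih => rw [pow_succ', Equiv.Perm.mul_apply, ih, Units.mulLeft_apply, hg]; ring
  rw [Quotient.eq'', MulAction.orbitRel_apply, MulAction.mem_orbit_iff]
  constructor
  · rintro ⟨⟨s, hs⟩, rfl⟩
    obtain ⟨i, rfl⟩ := (mem_powers_iff_mem_zpowers (x := Units.mulLeft g)).2 hs
    exact ⟨i, hpow i⟩
  · rintro ⟨i, rfl⟩
    exact ⟨⟨_, Subgroup.npow_mem_zpowers _ i⟩, hpow i⟩

/-- The orbit representatives `0`, `2 ^ j` for `j < k`, and `-2 ^ j` for `j < k - 2`, as integers. -/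
def orbitRep (k : ℕ) : Option (Fin k ⊕ Fin (k - 2)) → ℤ
  | none => 0
  | some (Sum.inl j) => 2 ^ (j : ℕ)
  | some (Sum.inr j) => -2 ^ (j : ℕ)

lemma orbitRep_injective (k : ℕ) (p q : Option (Fin k ⊕ Fin (k - 2))) (i : ℕ)
    (h : (2 : ℤ) ^ k ∣ orbitRep k p - 3 ^ i * orbitRep k q) : p = q := by
  have h3 : Odd ((3 : ℤ) ^ i) := Odd.pow (by decide)
  have h1 : Odd (1 : ℤ) := odd_one
  -- Opposite signs force `j = l` and then `8 ∣ 3 ^ i + 1`.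
  have key (j l : ℕ) (hj : j < k) (hl : l < k) (hjl : j < k - 2 ∨ l < k - 2)
      (h : (2 : ℤ) ^ k ∣ 2 ^ j * 1 - 2 ^ l * (-3 ^ i)) : False := by
    have e1 := le_of_two_pow_dvd_sub hj h1 h
    have e2 := le_of_two_pow_dvd_sub hl h3.neg ((dvd_sub_comm).1 h)
    obtain rfl : j = l := by omega
    have e3 : (2 : ℤ) ^ j * 8 ∣ 2 ^ j * (3 ^ i + 1) := by
      have e4 : (2 : ℤ) ^ (j + 3) ∣ 2 ^ k := pow_dvd_pow 2 (by omega)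
      have e5 : (2 : ℤ) ^ j * 8 = 2 ^ (j + 3) := by ring
      exact e5 ▸ (e4.trans h).trans (dvd_of_eq (by ring))
    exact not_eight_dvd_three_pow_add_one i ((mul_dvd_mul_iff_left (by positivity)).1 e3)
  have same (j l : ℕ) (hj : j < k) (hl : l < k)
      (h : (2 : ℤ) ^ k ∣ 2 ^ j * 1 - 2 ^ l * 3 ^ i) : j = l :=
    le_antisymm (le_of_two_pow_dvd_sub hl h3 ((dvd_sub_comm).1 h))
      (le_of_two_pow_dvd_sub hj h1 h)
  rcases p with _ | ⟨j, hj⟩ | ⟨j, hj⟩ <;> rcases q with _ | ⟨l, hl⟩ | ⟨l, hl⟩ <;>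
    simp only [orbitRep] at h
  · rfl
  · refine (not_two_pow_dvd hl h3.neg ?_).elim
    exact h.trans (dvd_of_eq (by ring))
  · refine (not_two_pow_dvd (k := k) (j := l) (by omega) h3 ?_).elim
    exact h.trans (dvd_of_eq (by ring))
  · refine (not_two_pow_dvd hj h1 ?_).elim
    exact h.trans (dvd_of_eq (by ring))
  · have := same j l hj hl (h.trans (dvd_of_eq (by ring)))
    subst this; rfl
  · refine (key j l hj (by omega) (Or.inr hl) ?_).elim
    exact h.trans (dvd_of_eq (by ring))
  · refine (not_two_pow_dvd (k := k) (j := j) (by omega) h1.neg ?_).elim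
    exact h.trans (dvd_of_eq (by ring))
  · refine (key j l (by omega) hl (Or.inl hj) ?_).elim
    exact (dvd_neg.2 h).trans (dvd_of_eq (by ring))
  · have := same j l (by omega) (by omega)
      ((dvd_neg.2 h).trans (dvd_of_eq (by ring)))
    subst this; rfl

lemma orbitRep_surjective (k : ℕ) (x : ℤ) :
    ∃ p i, (2 : ℤ) ^ k ∣ x - 3 ^ i * orbitRep k p := by
  by_cases hx : (2 : ℤ) ^ k ∣ x
  · exact ⟨none, 0, by simpa [orbitRep] using hx⟩
  have hx0 : x ≠ 0 := by rintro rfl; simp at hx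
  obtain ⟨j, a, ha, rfl⟩ : ∃ (j : ℕ) (a : ℤ), ¬ 2 ∣ a ∧ x = 2 ^ j * a := by
    have hf : FiniteMultiplicity 2 x := Int.finiteMultiplicity_iff.2 ⟨by decide, hx0⟩
    obtain ⟨a, h1, h2⟩ := hf.exists_eq_pow_mul_and_not_dvd
    exact ⟨_, a, h2, h1⟩
  have hj : j < k := by
    by_contra! hj
    exact hx ((pow_dvd_pow 2 hj).mul_right a)
  have ha' : Odd a := by rwa [← Int.not_even_iff_odd, even_iff_two_dvd]
  obtain ⟨i, hi | hi⟩ := exists_three_pow k a ha'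
  · refine ⟨some (Sum.inl ⟨j, hj⟩), i, ?_⟩
    refine (hi.mul_left (2 ^ j)).trans (dvd_of_eq ?_)
    simp only [orbitRep]; ring
  · by_cases hj2 : j < k - 2
    · refine ⟨some (Sum.inr ⟨j, hj2⟩), i, ?_⟩
      refine (hi.mul_left (2 ^ j)).trans (dvd_of_eq ?_)
      simp only [orbitRep]; ring
    · -- Here `2 ^ k ∣ 2 ^ (j + 2) = 2 ^ j + 3 * 2 ^ j`.
      refine ⟨some (Sum.inl ⟨j, hj⟩), i + 1, ?_⟩
      have h4 : (2 : ℤ) ^ k ∣ 2 ^ (j + 2) := pow_dvd_pow 2 (by omega)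
      refine ((hi.mul_left (2 ^ j)).sub (h4.mul_left (3 ^ i))).trans (dvd_of_eq ?_)
      simp only [orbitRep]; ring

/-- For `k ≥ 3`, multiplication by `3` on `ZMod 2^k` has exactly `2k - 1`
cycles. -/
theorem cyc_mul_three (k : ℕ) (hk : 3 ≤ k) (g : (ZMod (2 ^ k))ˣ)
    (hg : (g : ZMod (2 ^ k)) = 3) :
    cyc (Units.mulLeft g) = 2 * k - 1 := by
  have hrel (x y : ℤ) (i : ℕ) :
      (x : ZMod (2 ^ k)) = 3 ^ i * (y : ZMod (2 ^ k)) ↔ (2 : ℤ) ^ k ∣ x - 3 ^ i * y := by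
    have h := ZMod.intCast_eq_intCast_iff_dvd_sub (3 ^ i * y) x (2 ^ k)
    push_cast at h
    rw [← h, eq_comm]
  let f : Option (Fin k ⊕ Fin (k - 2)) →
      MulAction.orbitRel.Quotient (Subgroup.zpowers (Units.mulLeft g)) (ZMod (2 ^ k)) :=
    fun p => Quotient.mk'' ((orbitRep k p : ℤ) : ZMod (2 ^ k))
  have hf : Function.Bijective f := by
    constructor
    · intro p q hpq
      obtain ⟨i, hi⟩ := (orbit_mk_eq_iff g hg _ _).1 hpq
      exact orbitRep_injective k p q i ((hrel _ _ _).1 hi)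
    · intro o
      induction o using Quotient.inductionOn' with
      | h x =>
        obtain ⟨x, rfl⟩ := ZMod.intCast_surjective x
        obtain ⟨p, i, h⟩ := orbitRep_surjective k x
        exact ⟨p, ((orbit_mk_eq_iff g hg _ _).2 ⟨i, (hrel _ _ _).2 h⟩).symm⟩
  rw [cyc, ← Nat.card_eq_of_bijective f hf, Nat.card_eq_fintype_card]
  simp only [Fintype.card_option, Fintype.card_sum, Fintype.card_fin]
  omega
end
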